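/- Fix an integer r ≥ 2. For k sufficiently large in terms of r, for every real x ≥ 0 one has ( ∫_{t_1,...,t_r ≥ 0, t_1+⋯+t_r ≤ x} g(t_1) ⋯ g(t_r) dt_1 ⋯ dt_r )² ≤ (log k)^r · ∫_{t_1,...,t_r ≥ 0, t_1+⋯+t_r ≤ x} g(t_1)² ⋯ g(t_r)² dt_1 ⋯ dt_r. -/

import Mathlib

open MeasureTheory Filter

/-- `A = log k - 2 log log k`. -/
noncomputable def Aval (k : ℕ) : ℝ := Real.log k - 2 * Real.log (Real.log k)

/-- `T = (e^A - 1)/A`. -/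
noncomputable def Tval (k : ℕ) : ℝ := (Real.exp (Aval k) - 1) / Aval k

/-- `g(t) = 1/(1+At)` for `t ∈ [0,T]` and `0` otherwise. -/
noncomputable def gfun (k : ℕ) (t : ℝ) : ℝ :=
  if t ∈ Set.Icc (0 : ℝ) (Tval k) then 1 / (1 + Aval k * t) else 0

lemma g_meas (k : ℕ) : Measurable (gfun k) := by
  unfold gfun
  refine Measurable.ite measurableSet_Icc ?_ measurable_const
  fun_prop

lemma g_nonneg (k : ℕ) (hA : 0 < Aval k) (t : ℝ) : 0 ≤ gfun k t := by
  unfold gfun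
  split_ifs with h
  · have := mul_nonneg hA.le h.1
    positivity
  · exact le_rfl

lemma g_le_one (k : ℕ) (hA : 0 < Aval k) (t : ℝ) : gfun k t ≤ 1 := by
  unfold gfun
  split_ifs with h
  · have := mul_nonneg hA.le h.1
    rw [div_le_one (by positivity)]
    linarith
  · exact zero_le_one

lemma g_ind (k : ℕ) :
    gfun k = Set.indicator (Set.Icc (0 : ℝ) (Tval k)) (fun t => 1 / (1 + Aval k * t)) := by
  ext t
  simp [gfun, Set.indicator_apply]

lemma g_integrable (k : ℕ) (hA : 0 < Aval k) : Integrable (gfun k) := by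
  rw [g_ind, integrable_indicator_iff measurableSet_Icc]
  apply ContinuousOn.integrableOn_Icc
  apply ContinuousOn.div (by fun_prop) (by fun_prop)
  intro t ht
  have := mul_nonneg hA.le ht.1
  positivity

lemma g_sq_integrable (k : ℕ) (hA : 0 < Aval k) : Integrable (fun t => gfun k t ^ 2) := by
  refine (g_integrable k hA).mono' ((g_meas k).pow_const 2).aestronglyMeasurable ?_
  refine Eventually.of_forall fun t => ?_
  have h0 := g_nonneg k hA t
  have h1 := g_le_one k hA t
  rw [Real.norm_of_nonneg (by positivity)]
  nlinarith

lemma T_nonneg (k : ℕ) (hA : 0 < Aval k) : 0 ≤ Tval k := by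
  unfold Tval
  have := Real.add_one_le_exp (Aval k)
  apply div_nonneg <;> linarith

lemma g_integral (k : ℕ) (hA : 0 < Aval k) : ∫ t, gfun k t = 1 := by
  have hT := T_nonneg k hA
  rw [g_ind, integral_indicator measurableSet_Icc, integral_Icc_eq_integral_Ioc,
    ← intervalIntegral.integral_of_le hT]
  have hpos : ∀ t ∈ Set.uIcc 0 (Tval k), 0 < 1 + Aval k * t := by
    intro t ht
    rw [Set.uIcc_of_le hT] at ht
    have := mul_nonneg hA.le ht.1
    positivity
  rw [intervalIntegral.integral_eq_sub_of_hasDerivAt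
    (f := fun t => Real.log (1 + Aval k * t) / Aval k)]
  · have : 1 + Aval k * Tval k = Real.exp (Aval k) := by
      unfold Tval; field_simp; ring
    simp only [this, Real.log_exp]
    simp [hA.ne']
  · intro t ht
    have h1 : HasDerivAt (fun t : ℝ => 1 + Aval k * t) (Aval k) t := by
      simpa using ((hasDerivAt_id t).const_mul (Aval k)).const_add 1
    have h2 := (h1.log (hpos t ht).ne').div_const (Aval k)
    have e : 1 / (1 + Aval k * t) = Aval k / (1 + Aval k * t) / Aval k := by
      have := (hpos t ht).ne'
      have := hA.ne'
      field_simp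
    rw [e]
    exact h2
  · apply ContinuousOn.intervalIntegrable
    exact ContinuousOn.div (by fun_prop) (by fun_prop) fun t ht => (hpos t ht).ne'

lemma g_sq_integral (k : ℕ) (hA : 0 < Aval k) (y : ℝ) (hy : 0 ≤ y) (hyT : y ≤ Tval k) :
    ∫ t, Set.indicator (Set.Icc 0 y) (fun t => gfun k t ^ 2) t = y / (1 + Aval k * y) := by
  have hpos : ∀ t ∈ Set.uIcc 0 y, 0 < 1 + Aval k * t := by
    intro t ht
    rw [Set.uIcc_of_le hy] at ht
    have := mul_nonneg hA.le ht.1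
    positivity
  have e : ∫ t in Set.Icc 0 y, gfun k t ^ 2 = ∫ t in Set.Icc 0 y, (1 / (1 + Aval k * t)) ^ 2 := by
    refine setIntegral_congr_fun measurableSet_Icc fun t ht => ?_
    have : t ∈ Set.Icc 0 (Tval k) := ⟨ht.1, ht.2.trans hyT⟩
    simp [gfun, this.1, this.2]
  rw [integral_indicator measurableSet_Icc, e, integral_Icc_eq_integral_Ioc,
    ← intervalIntegral.integral_of_le hy]
  rw [intervalIntegral.integral_eq_sub_of_hasDerivAt
    (f := fun t => t / (1 + Aval k * t))]
  · simp
  · intro t ht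
    have h1 : HasDerivAt (fun t : ℝ => 1 + Aval k * t) (Aval k) t := by
      simpa using ((hasDerivAt_id t).const_mul (Aval k)).const_add 1
    have h2 := (hasDerivAt_id t).div h1 (hpos t ht).ne'
    have e : (1 / (1 + Aval k * t)) ^ 2
        = (1 * (1 + Aval k * t) - t * Aval k) / (1 + Aval k * t) ^ 2 := by
      rw [div_pow]
      congr 1
      ring
    rw [e]
    exact h2
  · apply ContinuousOn.intervalIntegrable
    exact (ContinuousOn.div (by fun_prop) (by fun_prop) fun t ht => (hpos t ht).ne').pow 2

lemma S_meas (r : ℕ) (x : ℝ) :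
    MeasurableSet {t : Fin r → ℝ | (∀ i, 0 ≤ t i) ∧ ∑ i, t i ≤ x} := by
  apply IsClosed.measurableSet
  have e : {t : Fin r → ℝ | (∀ i, 0 ≤ t i) ∧ ∑ i, t i ≤ x}
      = (⋂ i, {t : Fin r → ℝ | 0 ≤ t i}) ∩ {t : Fin r → ℝ | ∑ i, t i ≤ x} := by
    ext t; simp
  rw [e]
  apply IsClosed.inter
  · exact isClosed_iInter fun i => isClosed_le continuous_const (continuous_apply i)
  · exact isClosed_le (by fun_prop) continuous_const

lemma S_sub (r : ℕ) (x : ℝ) :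
    {t : Fin r → ℝ | (∀ i, 0 ≤ t i) ∧ ∑ i, t i ≤ x} ⊆ Set.Icc 0 (fun _ => x) := by
  rintro t ⟨h0, h1⟩
  refine ⟨h0, fun i => le_trans ?_ h1⟩
  exact Finset.single_le_sum (fun j _ => h0 j) (Finset.mem_univ i)

lemma cs {α : Type*} [MeasurableSpace α] (μ : Measure α) [IsFiniteMeasure μ] (f : α → ℝ) (W : ℝ)
    (hW : 0 < W) (hV : μ.real Set.univ ≤ W) (hf : Integrable f μ)
    (hf2 : Integrable (fun a => f a ^ 2) μ) :
    (∫ a, f a ∂μ) ^ 2 ≤ W * ∫ a, f a ^ 2 ∂μ := by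
  set I := ∫ a, f a ∂μ with hI
  have h : 0 ≤ ∫ a, (W * f a - I) ^ 2 ∂μ := integral_nonneg fun a => sq_nonneg _
  have e : ∫ a, (W * f a - I) ^ 2 ∂μ
      = W ^ 2 * (∫ a, f a ^ 2 ∂μ) - 2 * W * I * I + μ.real Set.univ * I ^ 2 := by
    have : ∀ a, (W * f a - I) ^ 2 = W ^ 2 * f a ^ 2 - 2 * W * I * f a + I ^ 2 := fun a => by ring
    simp_rw [this]
    have hs : Integrable (fun a => W ^ 2 * f a ^ 2 - 2 * W * I * f a) μ :=
      (hf2.const_mul _).sub (hf.const_mul _)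
    rw [integral_add hs (integrable_const _),
      integral_sub (hf2.const_mul _) (hf.const_mul _), integral_const_mul, integral_const_mul,
      integral_const, ← hI, smul_eq_mul]
  rw [e] at h
  have h3 := mul_le_mul_of_nonneg_right hV (sq_nonneg I)
  have h4 : 0 ≤ W * (W * (∫ a, f a ^ 2 ∂μ) - I ^ 2) := by nlinarith
  have := nonneg_of_mul_nonneg_right h4 hW
  linarith

lemma main_k (r : ℕ) (hr : 2 ≤ r) (k : ℕ) (hA : 0 < Aval k) (hL : 0 < Real.log k)
    (hT : Real.log k ≤ Tval k) (hl : (r : ℝ) ≤ 2 * Real.log k * Real.log (Real.log k))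
    (x : ℝ) (hx : 0 ≤ x) :
      (∫ t in {t : Fin r → ℝ | (∀ i, 0 ≤ t i) ∧ ∑ i, t i ≤ x}, ∏ i, gfun k (t i)) ^ 2 ≤
        Real.log k ^ r *
          ∫ t in {t : Fin r → ℝ | (∀ i, 0 ≤ t i) ∧ ∑ i, t i ≤ x}, ∏ i, gfun k (t i) ^ 2 := by
  have hi1 : Integrable (fun t : Fin r → ℝ => ∏ i, gfun k (t i)) :=
    Integrable.fintype_prod (f := fun _ => gfun k) fun _ => g_integrable k hA
  have hi2 : Integrable (fun t : Fin r → ℝ => ∏ i, gfun k (t i) ^ 2) :=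
    Integrable.fintype_prod (f := fun _ t => gfun k t ^ 2) fun _ => g_sq_integrable k hA
  have hg := g_nonneg k hA
  set S := {t : Fin r → ℝ | (∀ i, 0 ≤ t i) ∧ ∑ i, t i ≤ x} with hS
  have hSm : MeasurableSet S := S_meas r x
  rcases le_total x (Real.log k) with hxL | hxL
  · have hsub : S ⊆ Set.Icc 0 (fun _ => x) := S_sub r x
    have hfin : volume (Set.Icc (0 : Fin r → ℝ) (fun _ => x)) ≠ ⊤ :=
      isCompact_Icc.measure_lt_top.ne
    have : IsFiniteMeasure (volume.restrict S) :=
      ⟨by rw [Measure.restrict_apply_univ]; exact (measure_mono hsub).trans_lt hfin.lt_top⟩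
    simp_rw [Finset.prod_pow] at hi2 ⊢
    refine cs (volume.restrict S) _ _ (pow_pos hL r) ?_ hi1.integrableOn hi2.integrableOn
    rw [measureReal_restrict_apply_univ]
    calc volume.real S ≤ volume.real (Set.Icc (0 : Fin r → ℝ) (fun _ => x)) :=
          measureReal_mono hsub hfin
      _ = x ^ r := by
          rw [measureReal_def, Real.volume_Icc_pi_toReal (a := 0) (b := fun _ => x) (fun _ => hx)]
          simp
      _ ≤ _ := by gcongr
  · have h1 : ∫ t in S, ∏ i, gfun k (t i) ≤ 1 := by
      calc _ ≤ ∫ t : Fin r → ℝ, ∏ i, gfun k (t i) :=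
            setIntegral_le_integral hi1
              (Eventually.of_forall fun t => Finset.prod_nonneg fun i _ => hg _)
        _ = 1 := by
            rw [integral_fintype_prod_volume_eq_pow (gfun k), g_integral k hA, one_pow]
    have h0 : 0 ≤ ∫ t in S, ∏ i, gfun k (t i) :=
      integral_nonneg fun t => Finset.prod_nonneg fun i _ => hg _
    set y : ℝ := Real.log k / r with hy
    have hr0 : (0 : ℝ) < r := by positivity
    have hr1 : (1 : ℝ) ≤ r := by exact_mod_cast (by omega : 1 ≤ r)
    have hy0 : 0 < y := div_pos hL hr0
    have hyT : y ≤ Tval k := (div_le_self hL.le hr1).trans hT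
    have h2 : (y / (1 + Aval k * y)) ^ r ≤ ∫ t in S, ∏ i, gfun k (t i) ^ 2 := by
      rw [← g_sq_integral k hA y hy0.le hyT]
      have := integral_fintype_prod_volume_eq_pow (ι := Fin r) 
        (Set.indicator (Set.Icc 0 y) (fun t => gfun k t ^ 2))
      rw [Fintype.card_fin] at this
      rw [← this, ← integral_indicator hSm]
      refine integral_mono ?_ (hi2.indicator hSm) ?_
      · exact Integrable.fintype_prod
          (f := fun _ => Set.indicator (Set.Icc 0 y) (fun t => gfun k t ^ 2))
          fun _ => (g_sq_integrable k hA).indicator measurableSet_Icc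
      · intro t
        by_cases h : ∀ i, t i ∈ Set.Icc 0 y
        · have ht : t ∈ S := by
            refine ⟨fun i => (h i).1, ?_⟩
            calc ∑ i, t i ≤ ∑ i : Fin r, y := Finset.sum_le_sum fun i _ => (h i).2
              _ = Real.log k := by simp [hy]; field_simp
              _ ≤ x := hxL
          simp only [Set.indicator_of_mem ht, Set.indicator_of_mem (h _)]
          exact le_rfl
        · push Not at h
          obtain ⟨i, hi⟩ := h
          have hz : ∏ i, Set.indicator (Set.Icc 0 y) (fun t => gfun k t ^ 2) (t i) = 0 :=
            Finset.prod_eq_zero (Finset.mem_univ i) (Set.indicator_of_notMem hi _)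
          simp only [hz]
          exact Set.indicator_nonneg (fun t _ => Finset.prod_nonneg fun i _ => sq_nonneg _) t
    have h3 : 1 ≤ Real.log k * (y / (1 + Aval k * y)) := by
      have hp : 0 < 1 + Aval k * y := by positivity
      rw [← mul_div_assoc, one_le_div hp]
      have hry : r * y = Real.log k := by rw [hy]; field_simp
      have : r * (1 + Aval k * y) ≤ r * (Real.log k * y) := by
        have e1 : r * (1 + Aval k * y) = r + Aval k * (r * y) := by ring
        have e2 : r * (Real.log k * y) = Real.log k * (r * y) := by ring
        rw [e1, e2, hry, Aval]
        nlinarith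
      exact le_of_mul_le_mul_left this hr0
    calc _ ≤ (1 : ℝ) := pow_le_one₀ h0 h1
      _ ≤ (Real.log k * (y / (1 + Aval k * y))) ^ r := one_le_pow₀ h3
      _ = Real.log k ^ r * (y / (1 + Aval k * y)) ^ r := mul_pow _ _ _
      _ ≤ _ := by gcongr

theorem stmt10 (r : ℕ) (hr : 2 ≤ r) :
    ∀ᶠ k : ℕ in atTop, ∀ x : ℝ, 0 ≤ x →
      (∫ t in {t : Fin r → ℝ | (∀ i, 0 ≤ t i) ∧ ∑ i, t i ≤ x}, ∏ i, gfun k (t i)) ^ 2 ≤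
        Real.log k ^ r *
          ∫ t in {t : Fin r → ℝ | (∀ i, 0 ≤ t i) ∧ ∑ i, t i ≤ x}, ∏ i, gfun k (t i) ^ 2 := by
  have hLt : Tendsto (fun k : ℕ => Real.log k) atTop atTop :=
    Real.tendsto_log_atTop.comp tendsto_natCast_atTop_atTop
  have hLLt := Real.tendsto_log_atTop.comp hLt
  have hlo : ∀ᶠ L : ℝ in atTop, Real.log L ≤ (1 / 8) * L := by
    have := (Real.isLittleO_log_id_atTop.def (by norm_num : (0 : ℝ) < 1 / 8))
    filter_upwards [this, eventually_ge_atTop 0] with L h h0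
    simp only [id, Real.norm_of_nonneg h0] at h
    exact (le_abs_self _).trans h
  filter_upwards [hLt.eventually_ge_atTop 1000, hLLt.eventually_ge_atTop (max 1 (r : ℝ)),
    hLt.eventually hlo] with k h1 h2 h3
  simp only [Function.comp] at h2
  have h21 := (le_max_left _ _).trans h2
  have h22 := (le_max_right _ _).trans h2
  set L := Real.log k with hL
  have hAL : 3 / 4 * L ≤ Aval k := by unfold Aval; linarith
  have hAL2 : Aval k ≤ L := by unfold Aval; linarith
  have hA : 0 < Aval k := by linarith
  refine fun x hx => main_k r hr k hA (by linarith) ?_ (by nlinarith) x hx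
  rw [← hL, Tval, le_div_iff₀ hA]
  have he := Real.pow_div_factorial_le_exp (Aval k) hA.le 3
  norm_num [Nat.factorial] at he
  have : L ^ 2 * 3 ≤ Aval k ^ 3 / 6 := by
    have : (3 / 4 * L) ^ 3 ≤ Aval k ^ 3 := by gcongr
    nlinarith [sq_nonneg L]
  nlinarith
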